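/- arXiv:1803.07463 — 2 statements merged into one kernel-verified Lean document; each statement's English description precedes it below -/
import Mathlib

section
/- (Burnside's theorem) Let V be a nontrivial finite-dimensional vector space over ℂ and let A be a subalgebra of the algebra End(V) = Module.End ℂ V of all linear transformations of V. If A acts irreducibly, i.e., the only submodules p of V satisfying a x ∈ p for all a ∈ A and x ∈ p are the zero subspace ⊥ and the whole space ⊤, then A is the full algebra: A = End(V). -/
/-!
Over an algebraically closed field `K`, irreducibility makes `V` a simple `A`-module whose
`A`-linear endomorphisms are, by Schur's lemma, the scalars. Hence every `K`-linear endomorphism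
of `V` commutes with `Module.End A V`, and the Jacobson density theorem, applied to a finite
spanning set of `V`, places it in `A`.
-/

section ModuleOverAlgebra

variable {R A M : Type*} [CommSemiring R] [Ring A] [Algebra R A] [AddCommGroup M] [Module R M]
  [Module A M] [IsScalarTower R A M]

theorem isSimpleModule_of_forall_invariant_eq_bot_or_top [Nontrivial M]
    (h : ∀ p : Submodule R M, (∀ a : A, ∀ x ∈ p, a • x ∈ p) → p = ⊥ ∨ p = ⊤) :
    IsSimpleModule A M := by
  refine (isSimpleModule_iff A M).mpr ⟨fun p ↦ ?_⟩
  simpa using h (p.restrictScalars R) fun a _ hx ↦ p.smul_mem a hx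

theorem lsmul_surjective_of_algebraMap_end_surjective [IsSemisimpleModule A M] [Module.Finite R M]
    (h : Function.Surjective (algebraMap R (Module.End A M))) :
    Function.Surjective (Algebra.lsmul R R M : A →ₐ[R] Module.End R M) := by
  intro f
  have : Module.Finite (Module.End A M) M := .of_restrictScalars_finite R _ _
  obtain ⟨a, ha⟩ := Module.Finite.toModuleEnd_moduleEnd_surjective
    (f.extendScalarsOfSurjective h : Module.End (Module.End A M) M)
  exact ⟨a, LinearMap.ext fun x ↦ congr($ha x)⟩

end ModuleOverAlgebra

theorem burnside_theorem_general
    {K V : Type*} [Field K] [IsAlgClosed K] [AddCommGroup V] [Module K V] [FiniteDimensional K V]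
    (A : Subalgebra K (Module.End K V))
    (hirr : ∀ p : Submodule K V, (∀ a ∈ A, ∀ x ∈ p, a x ∈ p) → p = ⊥ ∨ p = ⊤) :
    A = ⊤ := by
  cases subsingleton_or_nontrivial V
  · exact Subsingleton.elim A ⊤
  have : IsSimpleModule A V :=
    isSimpleModule_of_forall_invariant_eq_bot_or_top fun p hp ↦ hirr p fun a ha ↦ hp ⟨a, ha⟩
  have schur : Function.Surjective (algebraMap K (Module.End A V)) :=
    (IsSimpleModule.algebraMap_end_bijective_of_isAlgClosed K).surjective
  have density : Function.Surjective A.val := lsmul_surjective_of_algebraMap_end_surjective schur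
  rw [← A.range_val, AlgHom.range_eq_top]
  exact density

theorem burnside_theorem
    {V : Type*} [AddCommGroup V] [Module ℂ V] [FiniteDimensional ℂ V]
    [Nontrivial V]
    (A : Subalgebra ℂ (Module.End ℂ V))
    (hirr : ∀ p : Submodule ℂ V,
      (∀ a ∈ A, ∀ x ∈ p, a x ∈ p) → p = ⊥ ∨ p = ⊤) :
    A = ⊤ :=
  burnside_theorem_general A hirr
end

section
/- Let P₁^z = [[1,0],[0,0]], P₂^z = [[0,0],[0,1]], P₁^x = (1/2)[[1,1],[1,1]], P₂^x = (1/2)[[1,−1],[−1,1]], P₁^y = (1/2)[[1,−i],[i,1]], P₂^y = (1/2)[[1,i],[−i,1]] be the six projection matrices built from the eigenvectors of the Pauli matrices, acting on ℂ² = Fin 2 → ℂ by matrix–vector multiplication. Then the only submodules of ℂ² invariant under all six of these linear maps are the zero subspace ⊥ and ℂ² itself; i.e., the intersection Lat(Σ^z) ∩ Lat(Σ^x) ∩ Lat(Σ^y) of their invariant-subspace lattices is {⊥, ⊤}. -/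
/-!
Project a nonzero vector of an invariant subspace onto one of its nonzero coordinates by a Lagrange
interpolation polynomial in an operator with simple spectrum: some eigenvector lies in the subspace.
A second operator that links the eigenvectors transitively then carries it to all the others. Here
`P₁^z` has simple spectrum, and no entry of `P₁^x` vanishes.
-/

open Module Polynomial

section Aeval

variable {R M : Type*} [CommSemiring R] [AddCommMonoid M] [Module R M]

theorem aeval_apply_mem_of_mem_invtSubmodule {f : End R M} {U : Submodule R M}
    (hU : U ∈ f.invtSubmodule) (p : R[X]) {x : M} (hx : x ∈ U) : aeval f p x ∈ U := by
  rw [aeval_eq_sum_range, LinearMap.sum_apply]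
  exact U.sum_mem fun n _ ↦ U.smul_mem _ (U.le_comap_pow_of_le_comap hU n hx)

end Aeval

section SimpleSpectrum

variable {K V ι : Type*} [Field K] [AddCommGroup V] [Module K V]

theorem eigenvector_mem_of_sum_mem {f : End K V} {U : Submodule K V}
    (hU : U ∈ f.invtSubmodule) {s : Finset ι} {μ : ι → K} (hμ : Set.InjOn μ s) {v : ι → V}
    (hv : ∀ i ∈ s, f (v i) = μ i • v i) (hsum : ∑ i ∈ s, v i ∈ U) {i : ι} (hi : i ∈ s) :
    v i ∈ U := by
  classical
  have haeval : aeval f (Lagrange.basis s μ i) (∑ j ∈ s, v j) = v i := calc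
    _ = ∑ j ∈ s, (Lagrange.basis s μ i).eval (μ j) • v j := by
      rw [map_sum]
      exact Finset.sum_congr rfl fun j hj ↦ End.aeval_apply_of_mem_apply_eq_smul (hv j hj)
    _ = (Lagrange.basis s μ i).eval (μ i) • v i :=
      Finset.sum_eq_single_of_mem i hi fun j hj hji ↦ by
        rw [Lagrange.eval_basis_of_ne hji.symm hj, zero_smul]
    _ = v i := by rw [Lagrange.eval_basis_self hμ hi, one_smul]
  exact haeval ▸ aeval_apply_mem_of_mem_invtSubmodule hU _ hsum

theorem eigenbasis_mem_of_repr_ne_zero (b : Basis ι K V) {f : End K V} {μ : ι → K}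
    (hμ : Function.Injective μ) (hf : ∀ i, f (b i) = μ i • b i) {U : Submodule K V}
    (hU : U ∈ f.invtSubmodule) {x : V} (hx : x ∈ U) {i : ι} (hi : b.repr x i ≠ 0) :
    b i ∈ U := by
  have hsum : ∑ j ∈ (b.repr x).support, b.repr x j • b j ∈ U := by
    rwa [← b.linearCombination_repr x] at hx
  rw [← U.smul_mem_iff hi]
  refine eigenvector_mem_of_sum_mem hU hμ.injOn (fun j _ ↦ ?_) hsum
    (Finsupp.mem_support_iff.mpr hi)
  rw [map_smul, hf, smul_comm]

theorem eq_bot_or_eq_top_of_eigenbasis_connected (b : Basis ι K V) {f g : End K V} {μ : ι → K}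
    (hμ : Function.Injective μ) (hf : ∀ i, f (b i) = μ i • b i)
    (hg : ∀ i j, Relation.ReflTransGen (fun k l ↦ b.repr (g (b k)) l ≠ 0) i j)
    {U : Submodule K V} (hUf : U ∈ f.invtSubmodule) (hUg : U ∈ g.invtSubmodule) :
    U = ⊥ ∨ U = ⊤ := by
  refine or_iff_not_imp_left.mpr fun hU ↦ ?_
  obtain ⟨x, hx, hx0⟩ := U.exists_mem_ne_zero_of_ne_bot hU
  obtain ⟨i, hi⟩ : ∃ i, b.repr x i ≠ 0 :=
    Finsupp.ne_iff.mp (b.repr.map_ne_zero_iff.mpr hx0)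
  have hbi : b i ∈ U := eigenbasis_mem_of_repr_ne_zero b hμ hf hUf hx hi
  have hb (j : ι) : b j ∈ U := by
    induction hg i j with
    | refl => exact hbi
    | tail _ hkl hk => exact eigenbasis_mem_of_repr_ne_zero b hμ hf hUf (hUg hk) hkl
  rw [eq_top_iff, ← b.span_eq, Submodule.span_le]
  exact Set.range_subset_iff.mpr hb

end SimpleSpectrum

theorem no_common_invariant_subspace_three_contexts_general {K n : Type*} [Field K] [Fintype n]
    [DecidableEq n] {d : n → K} (hd : Function.Injective d) {A : Matrix n n K}
    (hA : ∀ i j, Relation.ReflTransGen (fun k l ↦ A l k ≠ 0) i j) {U : Submodule K (n → K)}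
    (hUd : U ∈ End.invtSubmodule (Matrix.diagonal d).mulVecLin)
    (hUA : U ∈ End.invtSubmodule A.mulVecLin) :
    U = ⊥ ∨ U = ⊤ := by
  refine eq_bot_or_eq_top_of_eigenbasis_connected (Pi.basisFun K n) hd (fun i ↦ ?_) ?_ hUd hUA
  · rw [Pi.basisFun_apply, Matrix.mulVecLin_apply, Matrix.diagonal_mulVec_single, ← smul_eq_mul,
      Pi.single_smul']
  · simpa using hA

theorem no_common_invariant_subspace_three_contexts
    (P₁z P₂z P₁x P₂x P₁y P₂y : Matrix (Fin 2) (Fin 2) ℂ)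
    (h1z : P₁z = !![1, 0; 0, 0])
    (h2z : P₂z = !![0, 0; 0, 1])
    (h1x : P₁x = (1 / 2 : ℂ) • !![1, 1; 1, 1])
    (h2x : P₂x = (1 / 2 : ℂ) • !![1, -1; -1, 1])
    (h1y : P₁y = (1 / 2 : ℂ) • !![1, -Complex.I; Complex.I, 1])
    (h2y : P₂y = (1 / 2 : ℂ) • !![1, Complex.I; -Complex.I, 1])
    (U : Submodule ℂ (Fin 2 → ℂ))
    (hU : ∀ M ∈ ({P₁z, P₂z, P₁x, P₂x, P₁y, P₂y} :
        Set (Matrix (Fin 2) (Fin 2) ℂ)), ∀ x ∈ U, M.mulVecLin x ∈ U) :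
    U = ⊥ ∨ U = ⊤ := by
  have hz : P₁z = Matrix.diagonal ![1, 0] := by rw [h1z, Matrix.diagonal_vec2]
  have hx (i j : Fin 2) : P₁x i j ≠ 0 := by
    fin_cases i <;> fin_cases j <;> simp [h1x]
  exact no_common_invariant_subspace_three_contexts_general
    (by simp [Function.Injective, Fin.forall_fin_two]) (fun i j ↦ .single (hx j i))
    (hz ▸ hU P₁z (by simp)) (hU P₁x (by simp))
end
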